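/- Assume h is continuous, strictly positive, and satisfies the reflection symmetry h(u₁, y, u₃, …, uₙ) = h(u₁, −y, u₃, …, uₙ) for all (u₁, y, u₃, …, uₙ) ∈ ℝⁿ, and that ∫ |x₂| h(x) dx < ∞. Then for every δ ≥ 0, ∫_{ℝⁿ} x₂ · f*_δ(x) dx < 0. -/

import Mathlib

/-!
Let `R` be the reflection of the second coordinate and split the half-space `L = L_δ` into its
`R`-invariant part `L ∩ R⁻¹ L` and the remainder `L \ R⁻¹ L`. On `L` the integrand `x₂ f*_δ(x)` is
`x₂` times a function even under `R`: the density `h` is symmetric and the selection weight depends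
on `x₁` only. This product is odd, so its integral over the invariant part vanishes. A feasible step
whose reflection is infeasible satisfies `x₁ cos θ + x₂ sin θ ≤ δ < x₁ cos θ - x₂ sin θ`, so
`x₂ < 0` on the remainder, which has positive volume.
-/

open MeasureTheory Real Set

/-- The constraint function `g(x) = x₁ cos θ + x₂ sin θ` on `ℝⁿ` with `n = m + 2 ≥ 2`. -/
noncomputable def constraintG (m : ℕ) (θ : ℝ) (x : Fin (m + 2) → ℝ) : ℝ :=
  x 0 * Real.cos θ + x 1 * Real.sin θ

/-- `L_δ = {x ∈ ℝⁿ : g(x) ≤ δ}`. -/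
noncomputable def Lset (m : ℕ) (θ δ : ℝ) : Set (Fin (m + 2) → ℝ) :=
  {x | constraintG m θ x ≤ δ}

/-- The density of the selected step:
`f*_δ(x) = λ h(x) 1_{L_δ}(x) μ(((−∞,x₁)×ℝ^{n−1}) ∩ L_δ)^{λ−1} / μ(L_δ)^λ`. -/
noncomputable def selectedDensity (m : ℕ) (θ : ℝ) (h : (Fin (m + 2) → ℝ) → ℝ)
    (μ : Measure (Fin (m + 2) → ℝ)) (lam : ℕ) (δ : ℝ) (x : Fin (m + 2) → ℝ) : ℝ :=
  (Lset m θ δ).indicator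
    (fun x =>
      (lam : ℝ) * h x * ((μ ({y | y 0 < x 0} ∩ Lset m θ δ)).toReal) ^ (lam - 1)
        / ((μ (Lset m θ δ)).toReal) ^ lam) x

section Integral

variable {α : Type*} [MeasurableSpace α] {ν : Measure α}

lemma integral_neg_of_ae_neg [NeZero ν] {f : α → ℝ} (hf : Integrable f ν)
    (hneg : ∀ᵐ x ∂ν, f x < 0) : ∫ x, f x ∂ν < 0 := by
  have hle : f ≤ᵐ[ν] 0 := hneg.mono fun _ hx => hx.le
  refine (integral_nonpos_of_ae hle).lt_of_ne fun hzero => ?_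
  have hfzero : f =ᵐ[ν] 0 := by
    have hnegzero : -f =ᵐ[ν] 0 :=
      (integral_eq_zero_iff_of_nonneg_ae (hle.mono fun _ hx => neg_nonneg.2 hx) hf.neg).1
        (by simp only [integral_neg, hzero, neg_zero])
    exact hnegzero.mono fun _ hx => neg_eq_zero.1 hx
  obtain ⟨x, hx, hx0⟩ := (hneg.and hfzero).exists
  exact hx.ne hx0

lemma setIntegral_eq_zero_of_odd {E : Type*} [NormedAddCommGroup E] [NormedSpace ℝ E]
    {R : α → α} (hR : MeasurePreserving R ν ν) (hinv : Function.Involutive R) {f : α → E}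
    (hodd : ∀ᵐ x ∂ν, f (R x) = -f x) {A : Set α} (hA : R ⁻¹' A = A) :
    ∫ x in A, f x ∂ν = 0 := by
  have hemb : MeasurableEmbedding R :=
    (MeasurableEquiv.ofInvolutive R hinv hR.measurable).measurableEmbedding
  have : IsAddTorsionFree E := .of_isTorsionFree ℝ E
  refine self_eq_neg.1 ?_
  calc ∫ x in A, f x ∂ν = ∫ x in R ⁻¹' A, f (R x) ∂ν :=
        (hR.setIntegral_preimage_emb hemb f A).symm
    _ = ∫ x in A, -f x ∂ν := by rw [hA]; exact integral_congr_ae (ae_restrict_of_ae hodd)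
    _ = -∫ x in A, f x ∂ν := integral_neg f

lemma setIntegral_neg_of_odd {R : α → α} (hR : MeasurePreserving R ν ν)
    (hinv : Function.Involutive R) {f : α → ℝ} (hodd : ∀ᵐ x ∂ν, f (R x) = -f x) {S : Set α}
    (hS : MeasurableSet S) (hf : IntegrableOn f S ν)
    (hneg : ∀ᵐ x ∂ν, x ∈ S \ R ⁻¹' S → f x < 0) (hpos : ν (S \ R ⁻¹' S) ≠ 0) :
    ∫ x in S, f x ∂ν < 0 := by
  have hRS : MeasurableSet (R ⁻¹' S) := hR.measurable hS
  have hinvariant : R ⁻¹' (S ∩ R ⁻¹' S) = S ∩ R ⁻¹' S := by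
    rw [preimage_inter, ← preimage_comp, hinv.comp_self, preimage_id, inter_comm]
  have : NeZero (ν.restrict (S \ R ⁻¹' S)) := ⟨mt Measure.restrict_eq_zero.1 hpos⟩
  calc ∫ x in S, f x ∂ν
      = ∫ x in S ∩ R ⁻¹' S, f x ∂ν + ∫ x in S \ R ⁻¹' S, f x ∂ν :=
        (integral_inter_add_sdiff hRS hf).symm
    _ = ∫ x in S \ R ⁻¹' S, f x ∂ν := by
        rw [setIntegral_eq_zero_of_odd hR hinv hodd hinvariant, zero_add]
    _ < 0 := integral_neg_of_ae_neg (hf.mono_set sdiff_subset)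
        ((ae_restrict_iff' (hS.diff hRS)).2 hneg)

end Integral

lemma measurePreserving_update {ι : Type*} [Fintype ι] [DecidableEq ι] {X : ι → Type*}
    [∀ i, MeasurableSpace (X i)] (ν : ∀ i, Measure (X i)) [∀ i, SigmaFinite (ν i)] (i : ι)
    {f : X i → X i} (hf : MeasurePreserving f (ν i) (ν i)) :
    MeasurePreserving (fun x : ∀ j, X j => Function.update x i (f (x i)))
      (Measure.pi ν) (Measure.pi ν) := by
  have hfactor : ∀ j, MeasurePreserving
      (Function.update (fun j => (id : X j → X j)) i f j) (ν j) (ν j) :=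
    (Function.forall_update_iff (fun j => (id : X j → X j))
      fun j g => MeasurePreserving g (ν j) (ν j)).2 ⟨hf, fun j _ => MeasurePreserving.id (ν j)⟩
  convert measurePreserving_pi ν ν hfactor using 3 with x j
  by_cases hj : j = i
  · subst hj
    simp only [Function.update_self]
  · simp only [Function.update_of_ne hj, id]

section CoordReflection

variable {ι : Type*} [DecidableEq ι]

/-- The orthogonal reflection of `ℝ^ι` in the hyperplane `xᵢ = 0`. -/
def coordReflection (i : ι) (x : ι → ℝ) : ι → ℝ :=
  Function.update x i (-(x i))

@[simp]
lemma coordReflection_apply_self (i : ι) (x : ι → ℝ) : coordReflection i x i = -(x i) :=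
  Function.update_self ..

lemma coordReflection_apply_of_ne {i j : ι} (hj : j ≠ i) (x : ι → ℝ) :
    coordReflection i x j = x j :=
  Function.update_of_ne hj ..

lemma coordReflection_involutive (i : ι) : Function.Involutive (coordReflection i) := fun x => by
  simp only [coordReflection, Function.update_self, neg_neg, Function.update_idem,
    Function.update_eq_self]

lemma measurePreserving_coordReflection [Fintype ι] (i : ι) :
    MeasurePreserving (coordReflection i) volume volume :=
  measurePreserving_update (fun _ => volume) i (Measure.measurePreserving_neg volume)

end CoordReflection

section Lset

variable {m : ℕ} {θ : ℝ}

lemma mem_Lset {δ : ℝ} {x : Fin (m + 2) → ℝ} : x ∈ Lset m θ δ ↔ constraintG m θ x ≤ δ :=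
  Iff.rfl

lemma constraintG_coordReflection (x : Fin (m + 2) → ℝ) :
    constraintG m θ (coordReflection 1 x) = x 0 * cos θ - x 1 * sin θ := by
  rw [constraintG, coordReflection_apply_self, coordReflection_apply_of_ne zero_ne_one]
  ring

@[fun_prop]
lemma continuous_constraintG : Continuous (constraintG m θ) := by
  unfold constraintG
  fun_prop

lemma measurableSet_Lset (δ : ℝ) : MeasurableSet (Lset m θ δ) :=
  measurableSet_le continuous_constraintG.measurable measurable_const

lemma apply_one_neg_of_mem_Lset_of_reflection_notMem (hθ : 0 < sin θ) {δ : ℝ}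
    {x : Fin (m + 2) → ℝ} (hx : x ∈ Lset m θ δ) (hRx : coordReflection 1 x ∉ Lset m θ δ) :
    x 1 < 0 := by
  have hfeasible : x 0 * cos θ + x 1 * sin θ ≤ δ := mem_Lset.1 hx
  have hinfeasible : δ < x 0 * cos θ - x 1 * sin θ :=
    constraintG_coordReflection x ▸ not_le.1 hRx
  exact neg_of_mul_neg_left (by linarith) hθ.le

lemma volume_Lset_sdiff_preimage_coordReflection_ne_zero (hθ : 0 < sin θ) (δ : ℝ) :
    volume (Lset m θ δ \ coordReflection 1 ⁻¹' Lset m θ δ) ≠ 0 := by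
  let U : Set (Fin (m + 2) → ℝ) :=
    {x | constraintG m θ x < δ} ∩ {x | δ < x 0 * cos θ - x 1 * sin θ}
  have hopen : IsOpen U :=
    (isOpen_lt (by fun_prop) (by fun_prop)).inter (isOpen_lt (by fun_prop) (by fun_prop))
  have hne : U.Nonempty := by
    let x : Fin (m + 2) → ℝ := Pi.single 1 (-(|δ| + 1) / sin θ)
    have hx0 : x 0 = 0 := Pi.single_eq_of_ne zero_ne_one _
    have hx1 : x 1 * sin θ = -(|δ| + 1) := by
      simp only [x, Pi.single_eq_same, div_mul_cancel₀ _ hθ.ne']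
    refine ⟨x, ?_, ?_⟩
    · rw [mem_ofPred_eq, constraintG, hx0, hx1]
      linarith [neg_abs_le δ]
    · rw [mem_ofPred_eq, hx0, hx1]
      linarith [le_abs_self δ]
  have hsub : U ⊆ Lset m θ δ \ coordReflection 1 ⁻¹' Lset m θ δ := fun x ⟨hltδ, hδlt⟩ =>
    ⟨mem_Lset.2 (le_of_lt hltδ), not_le.2 (hδlt.trans_eq (constraintG_coordReflection x).symm)⟩
  exact ((hopen.measure_pos volume hne).trans_le (measure_mono hsub)).ne'

lemma volume_halfSpace_inter_Lset_ne_zero (hθ : 0 < sin θ) (δ a : ℝ) :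
    volume ({y | y 0 < a} ∩ Lset m θ δ) ≠ 0 := by
  let U : Set (Fin (m + 2) → ℝ) := {y | y 0 < a} ∩ {y | constraintG m θ y < δ}
  have hopen : IsOpen U :=
    (isOpen_lt (by fun_prop) (by fun_prop)).inter (isOpen_lt (by fun_prop) (by fun_prop))
  have hne : U.Nonempty := by
    refine ⟨Pi.single 0 (a - 1) + Pi.single 1 ((δ - 1 - (a - 1) * cos θ) / sin θ), ?_, ?_⟩
    · simp
    · simp [constraintG, hθ.ne']
  have hsub : U ⊆ {y | y 0 < a} ∩ Lset m θ δ := fun y ⟨hya, hyδ⟩ => ⟨hya, mem_Lset.2 (le_of_lt hyδ)⟩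
  exact ((hopen.measure_pos volume hne).trans_le (measure_mono hsub)).ne'

end Lset

section SelectionWeight

variable {m : ℕ} {θ : ℝ} {μ : Measure (Fin (m + 2) → ℝ)}

/-- The mass of the feasible steps whose first coordinate is less than `a`: its `(λ-1)`-th power is,
up to normalisation, the probability that a step with first coordinate `a` beats the `λ - 1` other
feasible steps. -/
noncomputable def selectionWeight (m : ℕ) (θ : ℝ) (μ : Measure (Fin (m + 2) → ℝ)) (δ a : ℝ) : ℝ :=
  μ.real ({y | y 0 < a} ∩ Lset m θ δ)

lemma selectionWeight_nonneg (δ a : ℝ) : 0 ≤ selectionWeight m θ μ δ a :=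
  measureReal_nonneg

variable [IsFiniteMeasure μ]

lemma selectionWeight_le (δ a : ℝ) : selectionWeight m θ μ δ a ≤ μ.real (Lset m θ δ) :=
  measureReal_mono inter_subset_right

lemma monotone_selectionWeight (δ : ℝ) : Monotone (selectionWeight m θ μ δ) := fun _ _ hab =>
  measureReal_mono (inter_subset_inter_left _ fun _ hy => lt_of_lt_of_le hy hab)

lemma selectionWeight_pos (hθ : 0 < sin θ) (hμ : volume ≪ μ) (δ a : ℝ) :
    0 < selectionWeight m θ μ δ a :=
  ENNReal.toReal_pos (mt (@hμ _) (volume_halfSpace_inter_Lset_ne_zero hθ δ a)) (measure_ne_top _ _)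

end SelectionWeight

section Density

/-- The density `f*_δ` without the indicator of `L_δ`, which is its only factor that is not
invariant under the reflection of the second coordinate. -/
noncomputable def unconstrainedDensity (m : ℕ) (θ : ℝ) (h : (Fin (m + 2) → ℝ) → ℝ)
    (μ : Measure (Fin (m + 2) → ℝ)) (lam : ℕ) (δ : ℝ) (x : Fin (m + 2) → ℝ) : ℝ :=
  (lam : ℝ) * h x * selectionWeight m θ μ δ (x 0) ^ (lam - 1) / μ.real (Lset m θ δ) ^ lam

variable {m : ℕ} {θ : ℝ} {h : (Fin (m + 2) → ℝ) → ℝ} {μ : Measure (Fin (m + 2) → ℝ)}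
  {lam : ℕ} {δ : ℝ} {x : Fin (m + 2) → ℝ}

lemma selectedDensity_eq_indicator :
    selectedDensity m θ h μ lam δ = (Lset m θ δ).indicator (unconstrainedDensity m θ h μ lam δ) :=
  rfl

lemma integral_mul_selectedDensity (f : (Fin (m + 2) → ℝ) → ℝ) :
    ∫ x, f x * selectedDensity m θ h μ lam δ x =
      ∫ x in Lset m θ δ, f x * unconstrainedDensity m θ h μ lam δ x := by
  rw [← integral_indicator (measurableSet_Lset δ)]
  simp only [selectedDensity_eq_indicator, indicator_mul_right]

lemma unconstrainedDensity_coordReflection (hx : h (coordReflection 1 x) = h x) :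
    unconstrainedDensity m θ h μ lam δ (coordReflection 1 x) =
      unconstrainedDensity m θ h μ lam δ x := by
  simp only [unconstrainedDensity, hx, coordReflection_apply_of_ne zero_ne_one]

lemma unconstrainedDensity_pos [IsFiniteMeasure μ] (hlam : lam ≠ 0) (hθ : 0 < sin θ)
    (hμ : volume ≪ μ) (hx : 0 < h x) : 0 < unconstrainedDensity m θ h μ lam δ x := by
  have hweight : 0 < selectionWeight m θ μ δ (x 0) := selectionWeight_pos hθ hμ δ (x 0)
  have hmass : 0 < μ.real (Lset m θ δ) := hweight.trans_le (selectionWeight_le δ (x 0))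
  unfold unconstrainedDensity
  positivity

lemma integrable_mul_unconstrainedDensity [IsFiniteMeasure μ] {f : (Fin (m + 2) → ℝ) → ℝ}
    (hf : Integrable (fun x => f x * h x)) :
    Integrable fun x => f x * unconstrainedDensity m θ h μ lam δ x := by
  have hmeas : Measurable fun x : Fin (m + 2) → ℝ => selectionWeight m θ μ δ (x 0) ^ (lam - 1) :=
    ((monotone_selectionWeight δ).measurable.comp (measurable_pi_apply 0)).pow_const _
  have hbound (x : Fin (m + 2) → ℝ) : ‖selectionWeight m θ μ δ (x 0) ^ (lam - 1)‖ ≤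
      μ.real (Lset m θ δ) ^ (lam - 1) := by
    rw [norm_pow, norm_of_nonneg (selectionWeight_nonneg δ (x 0))]
    gcongr
    · exact selectionWeight_nonneg δ (x 0)
    · exact selectionWeight_le δ (x 0)
  refine ((hf.mul_bdd hmeas.aestronglyMeasurable (ae_of_all _ hbound)).const_mul
    (lam / μ.real (Lset m θ δ) ^ lam)).congr (ae_of_all _ fun x => ?_)
  simp only [unconstrainedDensity]
  ring

end Density

theorem selected_second_coordinate_negative_general {m lam : ℕ} (hlam : lam ≠ 0) {θ : ℝ}
    (hθ : 0 < sin θ) {h : (Fin (m + 2) → ℝ) → ℝ} (hmeas : AEMeasurable h)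
    (hpos : ∀ᵐ x, 0 < h x) (hsym : ∀ᵐ x, h (coordReflection 1 x) = h x)
    (hint : Integrable fun x : Fin (m + 2) → ℝ => |x 1| * h x)
    {μ : Measure (Fin (m + 2) → ℝ)} [IsFiniteMeasure μ]
    (hμ : μ = volume.withDensity fun x => ENNReal.ofReal (h x)) (δ : ℝ) :
    ∫ x, x 1 * selectedDensity m θ h μ lam δ x < 0 := by
  have hac : volume ≪ μ := hμ ▸ withDensity_absolutelyContinuous' hmeas.ennreal_ofReal
    (hpos.mono fun _ hx => (ENNReal.ofReal_pos.2 hx).ne')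
  have hmoment : Integrable fun x : Fin (m + 2) → ℝ => x 1 * h x :=
    hint.mono ((measurable_pi_apply 1).aemeasurable.mul hmeas).aestronglyMeasurable
      (ae_of_all _ fun x => by simp only [norm_mul, norm_abs_eq_norm, le_refl])
  rw [integral_mul_selectedDensity]
  refine setIntegral_neg_of_odd (measurePreserving_coordReflection 1) (coordReflection_involutive 1)
    ?odd (measurableSet_Lset δ) (integrable_mul_unconstrainedDensity hmoment).integrableOn
    ?neg (volume_Lset_sdiff_preimage_coordReflection_ne_zero hθ δ)
  case odd =>
    filter_upwards [hsym] with x hx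
    rw [unconstrainedDensity_coordReflection hx, coordReflection_apply_self, neg_mul]
  case neg =>
    filter_upwards [hpos] with x hx hxL
    exact mul_neg_of_neg_of_pos (apply_one_neg_of_mem_Lset_of_reflection_notMem hθ hxL.1 hxL.2)
      (unconstrainedDensity_pos hlam hθ hac hx)

/-- if the step density `h` is continuous, strictly positive, symmetric
under reflection of the second coordinate, and has integrable second marginal moment,
then the mean second coordinate of the selected step is strictly negative:
`∫ x₂ f*_δ(x) dx < 0` for every `δ ≥ 0`. -/
theorem selected_second_coordinate_negative
    {m lam : ℕ} (hlam : 2 ≤ lam) (θ : ℝ) (hθ : θ ∈ Set.Ioo 0 (π / 2))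
    (h : (Fin (m + 2) → ℝ) → ℝ) (hcont : Continuous h) (hpos : ∀ x, 0 < h x)
    (hsym : ∀ x : Fin (m + 2) → ℝ, h (Function.update x 1 (-(x 1))) = h x)
    (hint : Integrable (fun x : Fin (m + 2) → ℝ => |x 1| * h x) volume)
    (μ : Measure (Fin (m + 2) → ℝ)) [IsProbabilityMeasure μ]
    (hμ : μ = volume.withDensity fun x => ENNReal.ofReal (h x)) :
    ∀ δ : ℝ, 0 ≤ δ → (∫ x, x 1 * selectedDensity m θ h μ lam δ x) < 0 := fun δ _ =>
  selected_second_coordinate_negative_general (two_pos.trans_le hlam).ne'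
    (sin_pos_of_pos_of_lt_pi hθ.1 (by linarith [hθ.2, pi_pos])) hcont.aemeasurable
    (ae_of_all _ hpos) (ae_of_all _ hsym) hint hμ δ
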